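/- arXiv:2408.02488 — 2 statements merged into one kernel-verified Lean document; each statement's English description precedes it below -/
import Mathlib

section
/- Let G and H be two n-vertex graphs and let b, c ∈ {0,1}ⁿ. If (1) the overgraphs G+b and H+c are generalized cospectral, and (2) G and H are generalized cospectral, then there exists an n×n real orthogonal matrix Q such that Qᵀ A(G) Q = A(H), Qᵀ e = e, and Qᵀ b = c. -/
open Matrix

noncomputable section

/-- The adjacency matrix of the complement graph: `J - I - A`. -/
def complMat {V : Type} [Fintype V] [DecidableEq V] (A : Matrix V V ℝ) : Matrix V V ℝ :=
  (Matrix.of fun _ _ => (1 : ℝ)) - 1 - A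

/-- Two graphs, given by their adjacency matrices, are generalized cospectral if they are
cospectral and their complements are cospectral. -/
def GenCospectral {V : Type} [Fintype V] [DecidableEq V] (A B : Matrix V V ℝ) : Prop :=
  A.charpoly = B.charpoly ∧ (complMat A).charpoly = (complMat B).charpoly

/-- The bordered matrix `[[A, b], [bᵀ, 0]]` (adjacency matrix of the overgraph `G + b`). -/
def border {V : Type} [Fintype V] [DecidableEq V] (A : Matrix V V ℝ) (b : V → ℝ) :
    Matrix (V ⊕ Unit) (V ⊕ Unit) ℝ :=
  Matrix.fromBlocks A (Matrix.of fun i _ => b i) (Matrix.of fun _ j => b j) 0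

theorem aux_partial {n : ℕ} (d r : Fin n → ℝ)
    (h : ∀ᶠ y in Filter.atTop, ∑ i, r i / (y - d i) = 0) (l : ℝ) :
    ∑ i, (if d i = l then r i else 0) = 0 := by
  classical
  set S := Finset.univ.image d with hS
  have hmem : ∀ i, d i ∈ S := fun i => Finset.mem_image_of_mem _ (Finset.mem_univ i)
  by_cases hl : l ∈ S
  · let P : Polynomial ℝ := ∑ i, Polynomial.C (r i) *
      ∏ v ∈ S.erase (d i), (Polynomial.X - Polynomial.C v)
    have hev : ∀ y, P.eval y = ∑ i, r i * ∏ v ∈ S.erase (d i), (y - v) := by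
      intro y
      simp [P, Polynomial.eval_finsetSum, Polynomial.eval_prod]
    have hP : P = 0 := by
      apply Polynomial.eq_zero_of_infinite_isRoot
      have h2 : ∀ᶠ y in Filter.atTop, P.IsRoot y := by
        have h3 : ∀ᶠ y : ℝ in Filter.atTop, ∀ i, d i < y :=
          Filter.eventually_all.2 fun i => Filter.eventually_gt_atTop (d i)
        filter_upwards [h, h3] with y hy hd
        rw [Polynomial.IsRoot, hev]
        have : ∀ i, r i * ∏ v ∈ S.erase (d i), (y - v)
            = (r i / (y - d i)) * ∏ v ∈ S, (y - v) := by
          intro i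
          rw [← Finset.mul_prod_erase S _ (hmem i)]
          have : y - d i ≠ 0 := sub_ne_zero.2 (hd i).ne'
          field_simp
        simp_rw [this]
        rw [← Finset.sum_mul, hy, zero_mul]
      obtain ⟨a, ha⟩ := Filter.eventually_atTop.1 h2
      exact (Set.Ici_infinite a).mono ha
    have h0 := hev l
    rw [hP, Polynomial.eval_zero] at h0
    have h1 : ∀ i, r i * ∏ v ∈ S.erase (d i), (l - v)
        = (if d i = l then r i else 0) * ∏ v ∈ S.erase l, (l - v) := by
      intro i
      split_ifs with hi
      · rw [hi]
      · rw [Finset.prod_eq_zero (i := l) (Finset.mem_erase.2 ⟨fun h => hi h.symm, hl⟩) (sub_self l)]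
        simp
    simp_rw [h1] at h0
    rw [← Finset.sum_mul] at h0
    have h4 : ∏ v ∈ S.erase l, (l - v) ≠ 0 := by
      rw [Finset.prod_ne_zero_iff]
      intro v hv
      exact sub_ne_zero.2 (Finset.ne_of_mem_erase hv).symm
    exact (mul_eq_zero.1 h0.symm).resolve_right h4
  · apply Finset.sum_eq_zero
    intro i _
    rw [if_neg]
    rintro rfl
    exact hl (hmem i)

theorem aux_tendsto {n : ℕ} (d r : Fin n → ℝ) :
    Filter.Tendsto (fun y : ℝ => ∑ i, r i / (y - d i)) Filter.atTop (nhds 0) := by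
  have : Filter.Tendsto (fun y : ℝ => ∑ i, r i / (y - d i)) Filter.atTop
      (nhds (∑ _i : Fin n, (0 : ℝ))) := by
    apply tendsto_finsetSum
    intro i _
    apply Filter.Tendsto.const_div_atTop
    exact Filter.tendsto_atTop_add_const_right _ (-d i) Filter.tendsto_id
  simpa using this

theorem aux_bord {V : Type} [Fintype V] [DecidableEq V] (P : Matrix V V ℝ) (d z : V → ℝ) (s : ℝ)
    (h : P *ᵥ z = d) :
    (Matrix.fromBlocks P (Matrix.of fun i (_ : Unit) => d i) (Matrix.of fun (_ : Unit) j => d j)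
      (Matrix.of fun _ _ => s)).det = P.det * (s - d ⬝ᵥ z) := by
  have h1 : Matrix.fromBlocks P (Matrix.of fun i (_ : Unit) => d i)
      (Matrix.of fun (_ : Unit) j => d j) (Matrix.of fun _ _ => s)
      = Matrix.fromBlocks P 0 (Matrix.of fun (_ : Unit) j => d j)
          (Matrix.of fun _ _ => s - d ⬝ᵥ z) *
        Matrix.fromBlocks 1 (Matrix.of fun i (_ : Unit) => z i) 0 1 := by
    rw [Matrix.fromBlocks_multiply]
    congr 1
    · simp
    · ext i j
      simp [Matrix.mul_apply, ← h, Matrix.mulVec, dotProduct]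
    · simp
    · ext i j
      simp [Matrix.mul_apply, dotProduct]
  rw [h1, Matrix.det_mul, Matrix.det_fromBlocks_zero₁₂, Matrix.det_fromBlocks_zero₂₁]
  simp

theorem aux_rank1 {V : Type} [Fintype V] [DecidableEq V] (N : Matrix V V ℝ) (p : V → ℝ)
    (h : N *ᵥ p = fun _ => 1) :
    (N + Matrix.of fun _ _ => (1 : ℝ)).det = N.det * (1 + (fun _ => (1 : ℝ)) ⬝ᵥ p) := by
  have : N + Matrix.of (fun _ _ => (1 : ℝ)) =
      N * (1 + replicateCol Unit p * replicateRow Unit (fun _ => (1 : ℝ))) := by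
    rw [mul_add, mul_one, ← Matrix.mul_assoc]
    congr 1
    ext i j
    have := congrFun h i
    simp only [Matrix.mulVec, dotProduct] at this
    simp [Matrix.mul_apply, this]
  rw [this, Matrix.det_mul, Matrix.det_one_add_replicateCol_mul_replicateRow]

theorem aux_compl {V : Type} [Fintype V] [DecidableEq V] (A : Matrix V V ℝ) (y : ℝ) :
    (complMat A).charpoly.eval (-(y + 1)) =
      (-1) ^ Fintype.card V * (Matrix.scalar V y - A + Matrix.of fun _ _ => (1 : ℝ)).det := by
  rw [Matrix.eval_charpoly, ← Matrix.det_neg]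
  congr 1
  ext i j
  by_cases hij : i = j
  · subst hij
    simp [complMat]
    ring
  · simp [complMat, hij]
    ring

/-- The three determinant identities. -/
theorem aux_core {n : ℕ} (A : Matrix (Fin n) (Fin n) ℝ) (b p q : Fin n → ℝ) (y α β γ : ℝ)
    (hp : (Matrix.scalar _ y - A) *ᵥ p = fun _ => 1)
    (hq : (Matrix.scalar _ y - A) *ᵥ q = b)
    (hα : (fun _ => (1 : ℝ)) ⬝ᵥ p = α) (hβ : (fun _ => (1 : ℝ)) ⬝ᵥ q = β)
    (hβ' : b ⬝ᵥ p = β) (hγ : b ⬝ᵥ q = γ) (hne : 1 + α ≠ 0) :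
    (border A b).charpoly.eval y = A.charpoly.eval y * (y - γ) ∧
    (complMat A).charpoly.eval (-(y + 1)) = (-1) ^ n * (A.charpoly.eval y * (1 + α)) ∧
    (complMat (border A b)).charpoly.eval (-(y + 1)) = (-1) ^ (n + 1) * (A.charpoly.eval y *
      ((1 + α) * (y + 1) - (α - 2 * β + γ) * (1 + α) + (α - β) ^ 2)) := by
  refine ⟨?_, ?_, ?_⟩
  · rw [Matrix.eval_charpoly, Matrix.eval_charpoly]
    have h1 := aux_bord (Matrix.scalar _ y - A) (-b) (-q) y (by rw [Matrix.mulVec_neg, hq])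
    rw [neg_dotProduct_neg, hγ] at h1
    rw [← h1]
    congr 1
    ext i j
    rcases i with i | i <;> rcases j with j | j <;> simp [border, Matrix.diagonal_apply]
  · rw [aux_compl, aux_rank1 _ p hp, hα, Matrix.eval_charpoly]
    simp
  · rw [aux_compl]
    have hcard : Fintype.card (Fin n ⊕ Unit) = n + 1 := by simp
    rw [hcard, Matrix.eval_charpoly]
    congr 1
    set N := Matrix.scalar _ y - A with hN
    have h1 := aux_bord (N + Matrix.of fun _ _ => (1 : ℝ)) ((fun _ => (1 : ℝ)) - b)
      (p - q - ((α - β) / (1 + α)) • p) (y + 1) (by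
        have hJ : ∀ z : Fin n → ℝ, (Matrix.of fun (_ _ : Fin n) => (1 : ℝ)) *ᵥ z
            = fun _ => (fun _ => (1 : ℝ)) ⬝ᵥ z := by
          intro z; ext i; simp [Matrix.mulVec, dotProduct]
        rw [Matrix.mulVec_sub, Matrix.mulVec_sub, Matrix.mulVec_smul]
        simp only [Matrix.add_mulVec, hJ, hp, hq, hα, hβ]
        ext i
        simp
        field_simp
        ring)
    rw [aux_rank1 _ p hp, hα] at h1
    have h2 : ((fun _ => (1 : ℝ)) - b) ⬝ᵥ (p - q - ((α - β) / (1 + α)) • p)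
        = α - 2 * β + γ - (α - β) ^ 2 / (1 + α) := by
      simp only [sub_dotProduct, dotProduct_sub, dotProduct_smul, hα, hβ, hβ', hγ, smul_eq_mul]
      ring
    rw [h2] at h1
    have h3 : N.det * (1 + α) * (y + 1 - (α - 2 * β + γ - (α - β) ^ 2 / (1 + α))) = N.det *
      ((1 + α) * (y + 1) - (α - 2 * β + γ) * (1 + α) + (α - β) ^ 2) := by
      field_simp
      ring
    rw [← h3, ← h1]
    congr 1
    ext i j
    rcases i with i | i <;> rcases j with j | j <;>
      simp [border, Matrix.diagonal_apply, hN]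
    all_goals ring

theorem aux_diag {n : ℕ} (A U : Matrix (Fin n) (Fin n) ℝ) (d x : Fin n → ℝ) (y : ℝ)
    (hU : Uᵀ * U = 1) (hU' : U * Uᵀ = 1) (hA : A = U * Matrix.diagonal d * Uᵀ)
    (hy : ∀ i, d i < y) :
    (Matrix.scalar _ y - A) *ᵥ (U *ᵥ fun i => (Uᵀ *ᵥ x) i / (y - d i)) = x := by
  have h1 : Matrix.scalar _ y - A = U * Matrix.diagonal (fun i => y - d i) * Uᵀ := by
    have : Matrix.diagonal (fun i => y - d i) = Matrix.scalar _ y - Matrix.diagonal d := by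
      rw [Matrix.scalar_apply, Matrix.diagonal_sub]
    rw [this, mul_sub, sub_mul, ← hA, ← (Matrix.scalar_commute y (fun _ => mul_comm _ _) U).eq,
      mul_assoc, hU', mul_one]
  rw [h1, Matrix.mulVec_mulVec, mul_assoc, hU, mul_one, ← Matrix.mulVec_mulVec]
  have h2 : (Matrix.diagonal (fun i => y - d i) *ᵥ fun i => (Uᵀ *ᵥ x) i / (y - d i)) = Uᵀ *ᵥ x := by
    ext i
    rw [Matrix.mulVec_diagonal]
    have : y - d i ≠ 0 := sub_ne_zero.2 (hy i).ne'
    field_simp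
  rw [h2, Matrix.mulVec_mulVec, hU', Matrix.one_mulVec]

theorem aux_dot {n : ℕ} (U : Matrix (Fin n) (Fin n) ℝ) (d x z : Fin n → ℝ) (y : ℝ) :
    z ⬝ᵥ (U *ᵥ fun i => (Uᵀ *ᵥ x) i / (y - d i)) =
      ∑ i, (Uᵀ *ᵥ z) i * (Uᵀ *ᵥ x) i / (y - d i) := by
  rw [Matrix.dotProduct_mulVec, ← Matrix.mulVec_transpose]
  simp only [dotProduct, mul_div_assoc]

/-- Blockwise Householder reflection. -/
theorem aux_house {n : ℕ} (d u v : Fin n → ℝ)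
    (h : ∀ l, ∑ k, (if d k = l then u k * u k - v k * v k else 0) = 0) :
    ∃ R : Matrix (Fin n) (Fin n) ℝ, Rᵀ * R = 1 ∧ R * Matrix.diagonal d = Matrix.diagonal d * R ∧
      R *ᵥ u = v ∧
      ∀ x : Fin n → ℝ, (∀ l, ∑ k, (if d k = l then x k * (u k - v k) else 0) = 0) → R *ᵥ x = x := by
  classical
  set w : Fin n → ℝ := fun k => u k - v k with hw
  set s : ℝ → ℝ := fun l => ∑ k, (if d k = l then w k * w k else 0) with hs
  set R : Matrix (Fin n) (Fin n) ℝ := Matrix.of fun i j =>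
    (if i = j then 1 else 0) - (if d j = d i then 2 * w i * w j / s (d i) else 0) with hR
  have hs0 : ∀ i, s (d i) = 0 → w i = 0 := by
    intro i hi
    have := (Finset.sum_eq_zero_iff_of_nonneg (fun k _ => by
      split_ifs
      · exact mul_self_nonneg _
      · exact le_rfl)).1 hi i (Finset.mem_univ i)
    simpa using this
  have hact : ∀ x : Fin n → ℝ, ∀ i, (R *ᵥ x) i =
      x i - 2 * w i / s (d i) * ∑ k, (if d k = d i then x k * w k else 0) := by
    intro x i
    simp only [Matrix.mulVec, dotProduct, hR, Matrix.of_apply, sub_mul, Finset.sum_sub_distrib]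
    congr 1
    · simp
    · rw [Finset.mul_sum]
      refine Finset.sum_congr rfl fun k _ => ?_
      split_ifs <;> ring
  have hsymm : Rᵀ = R := by
    ext i j
    simp only [hR, Matrix.transpose_apply, Matrix.of_apply]
    congr 1
    · simp [eq_comm]
    · by_cases hij : d i = d j
      · simp [hij]; ring
      · simp [hij, Ne.symm hij]
  refine ⟨R, ?_, ?_, ?_, ?_⟩
  · rw [hsymm]
    have key : ∀ x : Fin n → ℝ, R *ᵥ (R *ᵥ x) = x := by
      intro x
      ext i
      rw [hact]
      have h1 : ∑ k, (if d k = d i then (R *ᵥ x) k * w k else 0) =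
          ∑ k, (if d k = d i then x k * w k else 0) -
          2 / s (d i) * (∑ k, (if d k = d i then x k * w k else 0)) * s (d i) := by
        rw [hs]
        simp only
        rw [Finset.mul_sum _ _ (2 / _ * _), ← Finset.sum_sub_distrib]
        refine Finset.sum_congr rfl fun k _ => ?_
        split_ifs with hk
        · rw [hact, hk]; ring
        · simp
      rw [h1, hact]
      by_cases h0 : s (d i) = 0
      · simp [hs0 i h0]
      · field_simp
        ring
    apply Matrix.ext_of_mulVec_single
    intro i
    rw [← Matrix.mulVec_mulVec, key, Matrix.one_mulVec]
  · ext i j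
    rw [Matrix.mul_diagonal, Matrix.diagonal_mul, mul_comm]
    by_cases hij : d j = d i
    · rw [hij]
    · have : i ≠ j := by rintro rfl; exact hij rfl
      simp [hR, hij, this]
  · ext i
    rw [hact]
    by_cases h0 : s (d i) = 0
    · have := hs0 i h0
      simp only [hw] at this
      simp [hw]
      simp [this]
      linarith
    · have h1 : 2 * ∑ k, (if d k = d i then u k * w k else 0) = s (d i) := by
        have := h (d i)
        refine sub_eq_zero.1 (Eq.trans ?_ this)
        rw [hs, Finset.mul_sum, ← Finset.sum_sub_distrib]
        refine Finset.sum_congr rfl fun k _ => ?_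
        split_ifs
        · simp only [hw]; ring
        · simp
      have h2 : 2 * w i / s (d i) * ∑ k, (if d k = d i then u k * w k else 0) = w i := by
        rw [div_mul_eq_mul_div, div_eq_iff h0, ← h1]; ring
      rw [h2]; simp [hw]
  · intro x hx
    ext i
    rw [hact, hx]
    simp

theorem aux_blockdot {n : ℕ} (d : Fin n → ℝ) (R : Matrix (Fin n) (Fin n) ℝ) (hR : Rᵀ * R = 1)
    (hc : R * Matrix.diagonal d = Matrix.diagonal d * R) (x z : Fin n → ℝ) (l : ℝ) :
    ∑ k, (if d k = l then (R *ᵥ x) k * (R *ᵥ z) k else 0) =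
      ∑ k, (if d k = l then x k * z k else 0) := by
  have hz : ∀ i j, d i ≠ d j → R i j = 0 := by
    intro i j hij
    have := congrFun (congrFun hc i) j
    rw [Matrix.mul_diagonal, Matrix.diagonal_mul] at this
    have h2 : (d i - d j) * R i j = 0 := by linarith
    exact (mul_eq_zero.1 h2).resolve_left (sub_ne_zero.2 hij)
  have e1 : ∀ x : Fin n → ℝ, ∀ k, (if d k = l then (R *ᵥ x) k else 0) =
      (R *ᵥ fun j => if d j = l then x j else 0) k := by
    intro x k
    simp only [Matrix.mulVec, dotProduct]
    by_cases hk : d k = l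
    · rw [if_pos hk]
      refine Finset.sum_congr rfl fun j _ => ?_
      by_cases hj : d j = l
      · simp [hj]
      · rw [hz k j (by rw [hk]; exact fun h => hj h.symm)]; simp
    · rw [if_neg hk]
      symm
      apply Finset.sum_eq_zero
      intro j _
      by_cases hj : d j = l
      · rw [hz k j (by rw [hj]; exact hk)]; simp
      · simp [hj]
  have e2 : ∀ a c : Fin n → ℝ, ∑ k, (if d k = l then a k * c k else 0) =
      (fun k => if d k = l then a k else 0) ⬝ᵥ (fun k => if d k = l then c k else 0) := by
    intro a c
    simp only [dotProduct]
    refine Finset.sum_congr rfl fun k _ => ?_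
    split_ifs <;> simp
  rw [e2, e2, funext (e1 x), funext (e1 z), Matrix.dotProduct_mulVec, ← Matrix.mulVec_transpose,
    Matrix.mulVec_mulVec, hR, Matrix.one_mulVec]

theorem aux_spec {n : ℕ} (A : Matrix (Fin n) (Fin n) ℝ) (hA : A.IsHermitian) :
    ∃ U : Matrix (Fin n) (Fin n) ℝ, Uᵀ * U = 1 ∧ U * Uᵀ = 1 ∧
      A = U * Matrix.diagonal hA.eigenvalues * Uᵀ := by
  have h1 : (hA.eigenvectorUnitary : Matrix (Fin n) (Fin n) ℝ)ᵀ * hA.eigenvectorUnitary = 1 := by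
    have := Unitary.coe_star_mul_self hA.eigenvectorUnitary
    rwa [Matrix.star_eq_conjTranspose, Matrix.conjTranspose_eq_transpose_of_trivial] at this
  refine ⟨hA.eigenvectorUnitary, h1, mul_eq_one_comm.1 h1, ?_⟩
  have := hA.spectral_theorem
  rw [Unitary.conjStarAlgAut_apply, Matrix.star_eq_conjTranspose,
    Matrix.conjTranspose_eq_transpose_of_trivial] at this
  exact this

/-- Proposition 5. If the overgraphs `G + b` and `H + c` are generalized
cospectral and `G` and `H` are generalized cospectral, then there is an orthogonal matrix `Q`
with `Qᵀ A(G) Q = A(H)`, `Qᵀ e = e` and `Qᵀ b = c`. -/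
theorem overgraph_genCospectral_exists_orthogonal
    {n : ℕ} (A B : Matrix (Fin n) (Fin n) ℝ) (b c : Fin n → ℝ)
    (hA : A.IsAdjMatrix) (hB : B.IsAdjMatrix)
    (hb : ∀ i, b i = 0 ∨ b i = 1) (hc : ∀ i, c i = 0 ∨ c i = 1)
    (hover : GenCospectral (border A b) (border B c))
    (hGH : GenCospectral A B) :
    ∃ Q : Matrix (Fin n) (Fin n) ℝ,
      Qᵀ * Q = 1 ∧ Qᵀ * A * Q = B ∧
        (Qᵀ *ᵥ fun _ => (1 : ℝ)) = (fun _ => 1) ∧ Qᵀ *ᵥ b = c := by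
  have hAh : A.IsHermitian := by
    rw [Matrix.IsHermitian, Matrix.conjTranspose_eq_transpose_of_trivial]; exact hA.symm
  have hBh : B.IsHermitian := by
    rw [Matrix.IsHermitian, Matrix.conjTranspose_eq_transpose_of_trivial]; exact hB.symm
  have hev := (hAh.eigenvalues_eq_eigenvalues_iff hBh).2 hGH.1
  obtain ⟨U, hU, hU', hAU⟩ := aux_spec A hAh
  obtain ⟨V, hV, hV', hBV⟩ := aux_spec B hBh
  rw [← hev] at hBV
  set d := hAh.eigenvalues with hd
  set e : Fin n → ℝ := fun _ => 1 with he
  set u1 := Uᵀ *ᵥ e with hu1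
  set u2 := Uᵀ *ᵥ b with hu2
  set v1 := Vᵀ *ᵥ e with hv1
  set v2 := Vᵀ *ᵥ c with hv2
  have h3 : ∀ᶠ y : ℝ in Filter.atTop, ∀ i, d i < y :=
    Filter.eventually_all.2 fun i => Filter.eventually_gt_atTop (d i)
  have small : ∀ r : Fin n → ℝ, ∀ᶠ y : ℝ in Filter.atTop, -1 < ∑ i, r i / (y - d i) := fun r =>
    (aux_tendsto d r).eventually (lt_mem_nhds (by norm_num))
  have main : ∀ᶠ y : ℝ in Filter.atTop,
      ∑ i, u1 i * u1 i / (y - d i) = ∑ i, v1 i * v1 i / (y - d i) ∧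
      ∑ i, u1 i * u2 i / (y - d i) = ∑ i, v1 i * v2 i / (y - d i) ∧
      ∑ i, u2 i * u2 i / (y - d i) = ∑ i, v2 i * v2 i / (y - d i) := by
    filter_upwards [h3, small (fun i => u1 i * u1 i), small (fun i => v1 i * v1 i),
      small (fun i => u1 i * u2 i), small (fun i => v1 i * v2 i)] with y hy s1 s2 s3 s4
    have cA := aux_core A b _ _ y _ _ _ (aux_diag A U d e y hU hU' hAU hy)
      (aux_diag A U d b y hU hU' hAU hy) (aux_dot U d e e y) (aux_dot U d b e y)
      ((aux_dot U d e b y).trans (Finset.sum_congr rfl fun i _ => by ring))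
      (aux_dot U d b b y) (by have := s1; simp only [hu1] at this; linarith)
    have cB := aux_core B c _ _ y _ _ _ (aux_diag B V d e y hV hV' hBV hy)
      (aux_diag B V d c y hV hV' hBV hy) (aux_dot V d e e y) (aux_dot V d c e y)
      ((aux_dot V d e c y).trans (Finset.sum_congr rfl fun i _ => by ring))
      (aux_dot V d c c y) (by have := s2; simp only [hv1] at this; linarith)
    rw [← hu1, ← hu2] at cA
    rw [← hv1, ← hv2, ← hover.1, ← hover.2, ← hGH.1, ← hGH.2] at cB
    obtain ⟨a1, a2, a3⟩ := cA
    obtain ⟨b1, b2, b3⟩ := cB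
    have hdet : A.charpoly.eval y ≠ 0 := by
      rw [hAh.charpoly_eq, Polynomial.eval_prod, Finset.prod_ne_zero_iff]
      intro i _
      simpa using sub_ne_zero.2 (hy i).ne'
    have hm : ∀ k : ℕ, ((-1 : ℝ)) ^ k ≠ 0 := fun k => pow_ne_zero _ (by norm_num)
    rw [a1] at b1
    rw [a2] at b2
    rw [a3] at b3
    have r1 := mul_left_cancel₀ hdet b1
    have r2 := mul_left_cancel₀ hdet (mul_left_cancel₀ (hm _) b2)
    have r3 := mul_left_cancel₀ hdet (mul_left_cancel₀ (hm _) b3)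
    generalize ∑ i, u1 i * u1 i / (y - d i) = α at *
    generalize ∑ i, v1 i * v1 i / (y - d i) = α' at *
    generalize ∑ i, u1 i * u2 i / (y - d i) = β at *
    generalize ∑ i, v1 i * v2 i / (y - d i) = β' at *
    generalize ∑ i, u2 i * u2 i / (y - d i) = γ at *
    generalize ∑ i, v2 i * v2 i / (y - d i) = γ' at *
    have q1 : α = α' := by linarith
    have q2 : γ = γ' := by linarith
    subst q1 q2
    refine ⟨rfl, ?_, rfl⟩
    have : (β - β') * (β + β' + 2) = 0 := by linear_combination r3
    rcases mul_eq_zero.1 this with h | h <;> linarith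
  have blk : ∀ r t : Fin n → ℝ,
      (∀ᶠ y : ℝ in Filter.atTop, ∑ i, r i / (y - d i) = ∑ i, t i / (y - d i)) →
      ∀ l, ∑ k, (if d k = l then r k - t k else 0) = 0 := by
    intro r t h l
    apply aux_partial d (fun k => r k - t k) _ l
    filter_upwards [h] with y hy
    simp only [sub_div, Finset.sum_sub_distrib, hy, sub_self]
  have k11 := blk _ _ (main.mono fun _ h => h.1)
  have k12 := blk _ _ (main.mono fun _ h => h.2.1)
  have k22 := blk _ _ (main.mono fun _ h => h.2.2)
  have split : ∀ (r t : Fin n → ℝ) l, ∑ k, (if d k = l then r k - t k else 0) =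
      ∑ k, (if d k = l then r k else 0) - ∑ k, (if d k = l then t k else 0) := by
    intro r t l
    rw [← Finset.sum_sub_distrib]
    refine Finset.sum_congr rfl fun k _ => ?_
    split_ifs <;> simp
  obtain ⟨R, hR, hRd, hRu, -⟩ := aux_house d u1 v1 k11
  obtain ⟨T, hT, hTd, hTu, hTx⟩ := aux_house d (R *ᵥ u2) v2 (by
    intro l
    rw [split, aux_blockdot d R hR hRd, ← split]
    exact k22 l)
  have hT1 : T *ᵥ v1 = v1 := by
    apply hTx
    intro l
    simp only [mul_sub]
    rw [split]
    nth_rewrite 1 [← hRu]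
    rw [aux_blockdot d R hR hRd, ← split]
    exact k12 l
  set S := T * R with hS
  have hSS : Sᵀ * S = 1 := by
    rw [hS, Matrix.transpose_mul, mul_assoc, ← mul_assoc Tᵀ, hT, one_mul, hR]
  have hSS' : S * Sᵀ = 1 := mul_eq_one_comm.1 hSS
  have hSd : S * Matrix.diagonal d = Matrix.diagonal d * S := by
    rw [hS, mul_assoc, hRd, ← mul_assoc, hTd, mul_assoc]
  have hQt : (U * Sᵀ * Vᵀ)ᵀ = V * S * Uᵀ := by
    simp [Matrix.transpose_mul, mul_assoc]
  refine ⟨U * Sᵀ * Vᵀ, ?_, ?_, ?_, ?_⟩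
  · rw [hQt]
    calc V * S * Uᵀ * (U * Sᵀ * Vᵀ) = V * (S * ((Uᵀ * U) * Sᵀ)) * Vᵀ := by simp only [mul_assoc]
      _ = 1 := by rw [hU, one_mul, hSS', mul_one, hV']
  · rw [hQt, hAU]
    calc V * S * Uᵀ * (U * Matrix.diagonal d * Uᵀ) * (U * Sᵀ * Vᵀ)
        = V * (S * ((Uᵀ * U) * (Matrix.diagonal d * ((Uᵀ * U) * Sᵀ)))) * Vᵀ := by
          simp only [mul_assoc]
      _ = V * ((S * Matrix.diagonal d) * Sᵀ) * Vᵀ := by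
          rw [hU, one_mul, one_mul]; simp only [mul_assoc]
      _ = B := by rw [hSd, mul_assoc (Matrix.diagonal d), hSS', mul_one, ← hBV]
  · rw [hQt, ← Matrix.mulVec_mulVec, ← Matrix.mulVec_mulVec, ← hu1, hS, ← Matrix.mulVec_mulVec,
      hRu, hT1, hv1, Matrix.mulVec_mulVec, hV', Matrix.one_mulVec]
  · rw [hQt, ← Matrix.mulVec_mulVec, ← Matrix.mulVec_mulVec, ← hu2, hS, ← Matrix.mulVec_mulVec,
      hTu, hv2, Matrix.mulVec_mulVec, hV', Matrix.one_mulVec]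
end
end

section
/- Let n ≥ 3 and let G be an n-vertex graph with vertices {u₁,…,uₙ}. Suppose the vertex-deleted subgraph G−uₙ is almost controllable, let Q₀ = Q₀(G−uₙ) = I − 2ξξᵀ/(ξᵀξ) (where ξ is a nonzero vector with W(G−uₙ)ᵀξ = 0), and let b ∈ {0,1}^{n−1} be the indicator vector of the neighborhood of uₙ in G. If Q₀ is not a permutation matrix and Q₀b ∉ {0,1}^{n−1}∖{b} (i.e., Q₀b is not a (0,1)-vector different from b), then G is reconstructible. -/
open Matrix

open scoped Classical

noncomputable section

/-- The real adjacency matrix of a simple graph. -/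
def adjMat {V : Type} [Fintype V] (G : SimpleGraph V) : Matrix V V ℝ :=
  Matrix.of fun i j => if G.Adj i j then 1 else 0

/-- The walk matrix `W(G) = [e, Ae, …, A^{m-1}e]` of a square matrix `A`
(`m` = number of rows). -/
def walkMatrix {V : Type} [Fintype V] [DecidableEq V] (A : Matrix V V ℝ) :
    Matrix V (Fin (Fintype.card V)) ℝ :=
  Matrix.of fun i j => (A ^ (j : ℕ) *ᵥ fun _ => (1 : ℝ)) i

/-- A graph `G` is reconstructible if every graph with the same deck (i.e. every graph `H`
admitting a bijection `σ` of the vertices such that `G - v ≅ H - σ v` for all `v`) is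
isomorphic to `G`. -/
def Reconstructible {n : ℕ} (G : SimpleGraph (Fin n)) : Prop :=
  ∀ H : SimpleGraph (Fin n),
    (∃ σ : Equiv.Perm (Fin n),
      ∀ v : Fin n,
        Nonempty ((G.induce {w : Fin n | w ≠ v}) ≃g (H.induce {w : Fin n | w ≠ σ v}))) →
    Nonempty (G ≃g H)

/-- The Householder matrix `Q₀ = I - 2ξξᵀ/(ξᵀξ)` associated with a vector `ξ`. -/
def householder {m : ℕ} (ξ : Fin m → ℝ) : Matrix (Fin m) (Fin m) ℝ :=
  1 - (2 / (ξ ⬝ᵥ ξ)) • vecMulVec ξ ξ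

/-- `Q` is a permutation matrix. -/
def IsPermMatrix {m : ℕ} (Q : Matrix (Fin m) (Fin m) ℝ) : Prop :=
  ∃ σ : Equiv.Perm (Fin m), Q = Matrix.of fun i j => if σ j = i then (1 : ℝ) else 0

lemma aux_pow_sum {V : Type} [Fintype V] [DecidableEq V] (B : Matrix V V ℝ) (k : ℕ) :
    ∀ g : V → V → ℝ, ∑ f : Fin (k+1) → V, (∏ i : Fin k, B (f i.castSucc) (f i.succ)) * g (f 0) (f (Fin.last k))
      = ∑ a, ∑ c, (B ^ k) a c * g a c := by
  induction k with
  | zero =>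
    intro g
    rw [Fintype.sum_equiv (Equiv.funUnique (Fin 1) V) _ (fun a => g a a)]
    · simp [Matrix.one_apply]
    · intro f
      simp
  | succ k ih =>
    intro g
    rw [← (Fin.consEquiv (fun _ : Fin (k+2) => V)).sum_comp, Fintype.sum_prod_type]
    refine Finset.sum_congr rfl fun a _ => ?_
    have h1 : ∀ f : Fin (k+1) → V,
        (∏ i : Fin (k+1), B ((Fin.cons a f : Fin (k+2) → V) i.castSucc) ((Fin.cons a f : Fin (k+2) → V) i.succ))
          * g ((Fin.cons a f : Fin (k+2) → V) 0) ((Fin.cons a f : Fin (k+2) → V) (Fin.last (k+1)))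
        = (∏ i : Fin k, B (f i.castSucc) (f i.succ)) * (B a (f 0) * g a (f (Fin.last k))) := by
      intro f
      rw [Fin.prod_univ_succ]
      simp only [Fin.castSucc_zero, Fin.cons_zero, Fin.cons_succ, ← Fin.succ_castSucc, ← Fin.succ_last]
      ring
    have h2 := ih (fun x y => B a x * g a y)
    simp only [Fin.consEquiv, Equiv.coe_fn_mk]
    simp only [h1]
    rw [h2, Finset.sum_comm]
    refine Finset.sum_congr rfl fun c _ => ?_
    rw [pow_succ', Matrix.mul_apply, Finset.sum_mul]
    exact Finset.sum_congr rfl fun x _ => by ring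

def IsWk {V : Type} (q : Prop) (k : ℕ) (G : SimpleGraph V) (f : Fin (k+1) → V) : Prop :=
  (∀ i : Fin k, G.Adj (f i.castSucc) (f i.succ)) ∧ (q → f 0 = f (Fin.last k))

lemma aux_count {V : Type} [Fintype V] [DecidableEq V] (q : Prop) (k : ℕ) (G : SimpleGraph V) :
    ((Finset.univ.filter (IsWk q k G)).card : ℝ)
      = ∑ a, ∑ c, ((adjMat G) ^ k) a c * (if (q → a = c) then 1 else 0) := by
  rw [← aux_pow_sum (adjMat G) k (fun a c => if (q → a = c) then 1 else 0)]
  rw [Finset.card_filter, Nat.cast_sum]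
  refine Finset.sum_congr rfl fun f _ => ?_
  simp only [adjMat, Matrix.of_apply]
  rw [Finset.prod_ite_zero]
  by_cases h1 : ∀ i : Fin k, G.Adj (f i.castSucc) (f i.succ) <;>
  by_cases h2 : (q → f 0 = f (Fin.last k)) <;> simp [IsWk, h1, h2]

def cnt {V : Type} [Fintype V] (q : Prop) (k s : ℕ) (G : SimpleGraph V) : ℕ :=
  Fintype.card {f : Fin (k+1) → V // IsWk q k G f ∧ (Finset.univ.image f).card = s}

lemma cnt_iso {V W : Type} [Fintype V] [Fintype W] (q : Prop) (k s : ℕ)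
    (G : SimpleGraph V) (H : SimpleGraph W) (φ : G ≃g H) : cnt q k s G = cnt q k s H := by
  refine Fintype.card_congr (Equiv.subtypeEquiv (Equiv.arrowCongr (Equiv.refl _) φ.toEquiv) ?_)
  intro f
  have h1 : Finset.univ.image (fun i => φ (f i)) = (Finset.univ.image f).image φ := by
    rw [Finset.image_image]; rfl
  have h2 : (Finset.univ.image (fun i => φ (f i))).card = (Finset.univ.image f).card := by
    rw [h1, Finset.card_image_of_injective _ φ.injective]
  have h3 : (Equiv.arrowCongr (Equiv.refl (Fin (k+1))) φ.toEquiv) f = fun i => φ (f i) := rfl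
  rw [h3, h2]
  simp [IsWk]
  intro _ _
  exact forall_congr' fun i => (φ.map_adj_iff).symm

lemma cnt_induce {V : Type} [Fintype V] (q : Prop) (k s : ℕ)
    (G : SimpleGraph V) (v : V) : cnt q k s (G.induce {w : V | w ≠ v}) =
      (Finset.univ.filter fun f : Fin (k+1) → V =>
        (IsWk q k G f ∧ (Finset.univ.image f).card = s) ∧ v ∉ Finset.univ.image f).card := by
  rw [← Fintype.card_subtype]
  have h0 : ∀ f : Fin (k+1) → {w : V | w ≠ v}, (Finset.univ.image (fun i => (f i : V))).card = (Finset.univ.image f).card := by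
    intro f
    have : Finset.univ.image (fun i => (f i : V)) = (Finset.univ.image f).image Subtype.val := by
      rw [Finset.image_image]; rfl
    rw [this, Finset.card_image_of_injective _ Subtype.val_injective]
  refine Fintype.card_congr
    { toFun := fun f => ⟨fun i => (f.1 i : V), ⟨⟨?_, ?_⟩, ?_⟩, ?_⟩
      invFun := fun f => ⟨fun i => ⟨f.1 i, ?_⟩, ⟨?_, ?_⟩, ?_⟩
      left_inv := fun f => rfl
      right_inv := fun f => rfl }
  · exact fun i => f.2.1.1 i
  · exact fun hq => congrArg Subtype.val (f.2.1.2 hq)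
  · rw [h0]; convert f.2.2
  · intro h
    obtain ⟨i, -, hi⟩ := Finset.mem_image.1 h
    exact (f.1 i).2 hi
  · intro h
    exact f.2.2 (Finset.mem_image.2 ⟨i, Finset.mem_univ _, h⟩)
  · exact fun i => f.2.1.1.1 i
  · exact fun hq => Subtype.ext (f.2.1.1.2 hq)
  · refine Eq.trans ?_ f.2.1.2
    refine Eq.trans ?_ (h0 fun i => ⟨f.1 i, fun h => f.2.2 (Finset.mem_image.2 ⟨i, Finset.mem_univ _, h⟩)⟩).symm
    congr!

lemma cnt_kelly {V : Type} [Fintype V] (q : Prop) (k s : ℕ) (G : SimpleGraph V) :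
    ∑ v, cnt q k s (G.induce {w : V | w ≠ v}) = (Fintype.card V - s) * cnt q k s G := by
  simp only [cnt_induce]
  have h : ∀ v : V, (Finset.univ.filter fun f : Fin (k+1) → V =>
        (IsWk q k G f ∧ (Finset.univ.image f).card = s) ∧ v ∉ Finset.univ.image f).card
      = ∑ f ∈ Finset.univ.filter (fun f : Fin (k+1) → V => IsWk q k G f ∧ (Finset.univ.image f).card = s),
        if v ∉ Finset.univ.image f then 1 else 0 := by
    intro v
    rw [← Finset.card_filter, Finset.filter_filter]
  simp only [h]
  rw [Finset.sum_comm]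
  have h2 : ∀ f ∈ Finset.univ.filter (fun f : Fin (k+1) → V => IsWk q k G f ∧ (Finset.univ.image f).card = s),
      (∑ v : V, if v ∉ Finset.univ.image f then 1 else 0) = Fintype.card V - s := by
    intro f hf
    rw [← Finset.card_filter, ← (Finset.mem_filter.1 hf).2.2, ← Finset.card_compl]
    congr 1
    ext v
    simp
  rw [Finset.sum_congr rfl h2, Finset.sum_const, smul_eq_mul, mul_comm, cnt, Fintype.card_subtype]

lemma cnt_deck {n : ℕ} (G H : SimpleGraph (Fin n)) (σ : Equiv.Perm (Fin n))
    (h : ∀ v : Fin n,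
        Nonempty ((G.induce {w : Fin n | w ≠ v}) ≃g (H.induce {w : Fin n | w ≠ σ v})))
    (q : Prop) (k : ℕ) (hk : k + 1 < n) :
    (Finset.univ.filter (IsWk q k G)).card = (Finset.univ.filter (IsWk q k H)).card := by
  have key : ∀ s < n, cnt q k s G = cnt q k s H := by
    intro s hs
    have h1 := cnt_kelly q k s G
    have h2 := cnt_kelly q k s H
    rw [← Equiv.sum_comp σ] at h2
    have h3 : (Fintype.card (Fin n) - s) * cnt q k s G = (Fintype.card (Fin n) - s) * cnt q k s H := by
      rw [← h1, ← h2]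
      refine Finset.sum_congr rfl fun v _ => ?_
      have h4 := cnt_iso q k s _ _ (h v).some
      convert h4
    rw [Fintype.card_fin] at h3
    exact Nat.eq_of_mul_eq_mul_left (by omega) h3
  have tot : ∀ K : SimpleGraph (Fin n), (Finset.univ.filter (IsWk q k K)).card
      = ∑ s ∈ Finset.range n, cnt q k s K := by
    intro K
    rw [Finset.card_eq_sum_card_fiberwise (f := fun f : Fin (k+1) → Fin n => (Finset.univ.image f).card) (t := Finset.range n)]
    · refine Finset.sum_congr rfl fun s _ => ?_
      rw [cnt, Fintype.card_subtype, Finset.filter_filter]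
      congr!
    · intro f _
      simp only [Finset.coe_range, Set.mem_Iio]
      have := Finset.card_image_le (s := (Finset.univ : Finset (Fin (k+1)))) (f := f)
      simp at this
      omega
  rw [tot, tot]
  exact Finset.sum_congr rfl fun s hs => key s (Finset.mem_range.1 hs)

lemma sum_tri (g : ℕ → ℝ) (k : ℕ) : ∑ i ∈ Finset.range k, ∑ j ∈ Finset.range i, g j
    = ∑ j ∈ Finset.range k, ((k:ℝ) - 1 - j) * g j := by
  induction k with
  | zero => simp
  | succ k ih =>
    rw [Finset.sum_range_succ, ih, Finset.sum_range_succ, ← Finset.sum_add_distrib]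
    push_cast
    rw [show ((k:ℝ) + 1 - 1 - k) * g k = 0 by ring, add_zero]
    exact Finset.sum_congr rfl fun j _ => by ring

section blocks
variable {m : ℕ} (A : Matrix (Fin m) (Fin m) ℝ) (b : Fin m → ℝ) (B : Matrix (Fin (m+1)) (Fin (m+1)) ℝ)

structure IsBlk : Prop where
  symA : A.IsSymm
  h11 : ∀ i j, B (Fin.castSucc i) (Fin.castSucc j) = A i j
  h12 : ∀ i, B (Fin.castSucc i) (Fin.last m) = b i
  h21 : ∀ i, B (Fin.last m) (Fin.castSucc i) = b i
  h22 : B (Fin.last m) (Fin.last m) = 0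

def yv (k : ℕ) : Fin m → ℝ := fun i => (B ^ k) (Fin.castSucc i) (Fin.last m)
def rv (k : ℕ) : ℝ := (B ^ k) (Fin.last m) (Fin.last m)
def Mv (k : ℕ) : Matrix (Fin m) (Fin m) ℝ := Matrix.of fun i j => (B ^ k) (Fin.castSucc i) (Fin.castSucc j)
def rho (k : ℕ) : ℝ := b ⬝ᵥ (A ^ k *ᵥ b)
def bet (k : ℕ) : ℝ := (fun _ => 1) ⬝ᵥ (A ^ k *ᵥ b)

variable {A b B}

lemma IsBlk.symB (h : IsBlk A b B) : B.IsSymm := by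
  ext i j
  rw [Matrix.transpose_apply]
  refine Fin.lastCases ?_ (fun i => ?_) i <;> refine Fin.lastCases ?_ (fun j => ?_) j
  · rfl
  · rw [h.h12, h.h21]
  · rw [h.h12, h.h21]
  · rw [h.h11, h.h11]; exact h.symA.apply _ _

lemma IsBlk.row (h : IsBlk A b B) (k : ℕ) (j : Fin m) :
    (B ^ k) (Fin.last m) (Fin.castSucc j) = yv B k j := by
  have : (B ^ k).IsSymm := h.symB.pow k
  exact this.apply _ _

lemma IsBlk.y_succ (h : IsBlk A b B) (k : ℕ) : yv B (k+1) = A *ᵥ yv B k + rv B k • b := by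
  ext i
  simp only [yv, rv, pow_succ', Matrix.mul_apply, Fin.sum_univ_castSucc, h.h11, h.h12,
    Matrix.mulVec, dotProduct, Pi.add_apply, Pi.smul_apply, smul_eq_mul]
  ring

lemma IsBlk.r_succ (h : IsBlk A b B) (k : ℕ) : rv B (k+1) = b ⬝ᵥ yv B k := by
  simp only [yv, rv, pow_succ', Matrix.mul_apply, Fin.sum_univ_castSucc, h.h21, h.h22, dotProduct]
  ring

lemma IsBlk.M_succ (h : IsBlk A b B) (k : ℕ) : Mv B (k+1) = A * Mv B k + vecMulVec b (yv B k) := by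
  ext i j
  simp only [Mv, pow_succ', Matrix.mul_apply, Fin.sum_univ_castSucc, h.h11, h.h12,
    Matrix.add_apply, Matrix.of_apply, vecMulVec_apply, h.row]

lemma rv_zero : rv B 0 = 1 := by simp [rv]
lemma yv_zero : yv B 0 = 0 := by
  ext i
  simp [yv]
lemma Mv_zero : Mv B 0 = 1 := by
  ext i j
  simp [Mv, Matrix.one_apply]

lemma IsBlk.y_eq (h : IsBlk A b B) (k : ℕ) :
    yv B k = ∑ i ∈ Finset.range k, rv B i • (A ^ (k - 1 - i) *ᵥ b) := by
  induction k with
  | zero => simp [yv_zero]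
  | succ k ih =>
    rw [h.y_succ, Finset.sum_range_succ, ih, Matrix.mulVec_sum]
    congr 1
    · refine Finset.sum_congr rfl fun i hi => ?_
      have := Finset.mem_range.1 hi
      rw [Matrix.mulVec_smul, Matrix.mulVec_mulVec, ← pow_succ', show k - 1 - i + 1 = k + 1 - 1 - i by omega]
    · simp

lemma IsBlk.M_eq (h : IsBlk A b B) (k : ℕ) :
    Mv B k = A ^ k + ∑ i ∈ Finset.range k, vecMulVec (A ^ (k - 1 - i) *ᵥ b) (yv B i) := by
  induction k with
  | zero => simp [Mv_zero]
  | succ k ih =>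
    rw [h.M_succ, Finset.sum_range_succ, ih, mul_add, Finset.mul_sum, pow_succ', ← add_assoc]
    congr 1
    · congr 1
      refine Finset.sum_congr rfl fun i hi => ?_
      have := Finset.mem_range.1 hi
      rw [Matrix.mul_vecMulVec, Matrix.mulVec_mulVec, ← pow_succ', show k - 1 - i + 1 = k + 1 - 1 - i by omega]
    · simp

lemma IsBlk.r_eq (h : IsBlk A b B) (k : ℕ) :
    rv B (k+1) = ∑ i ∈ Finset.range k, rv B i * rho A b (k - 1 - i) := by
  rw [h.r_succ, h.y_eq, dotProduct_sum]
  simp [rho]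

lemma IsBlk.ay_eq (h : IsBlk A b B) (p k : ℕ) :
    (A ^ p *ᵥ b) ⬝ᵥ yv B k = ∑ i ∈ Finset.range k, rv B i * rho A b (p + (k - 1 - i)) := by
  rw [h.y_eq, dotProduct_sum]
  refine Finset.sum_congr rfl fun i _ => ?_
  have hs : (A ^ p)ᵀ = A ^ p := (h.symA.pow p)
  rw [dotProduct_smul, smul_eq_mul, rho, pow_add, ← Matrix.mulVec_mulVec, Matrix.dotProduct_mulVec b,
    ← Matrix.mulVec_transpose, hs]

lemma IsBlk.trace_eq (h : IsBlk A b B) (l : ℕ) :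
    (B ^ (l+2)).trace = (A ^ (l+2)).trace
      + ∑ j ∈ Finset.range (l+1), ((l:ℝ) + 2 - j) * (rv B j * rho A b (l - j)) := by
  have h1 : (B ^ (l+2)).trace = (Mv B (l+2)).trace + rv B (l+2) := by
    simp [Matrix.trace, Fin.sum_univ_castSucc, Mv, rv]
  rw [h1, h.M_eq, Matrix.trace_add, Matrix.trace_sum, h.r_eq, add_assoc]
  congr 1
  have h2 : ∑ i ∈ Finset.range (l+2), (vecMulVec (A ^ (l + 2 - 1 - i) *ᵥ b) (yv B i)).trace
      = ∑ i ∈ Finset.range (l+2), ∑ j ∈ Finset.range i, rv B j * rho A b (l - j) := by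
    refine Finset.sum_congr rfl fun i hi => ?_
    rw [Matrix.trace_vecMulVec, h.ay_eq]
    refine Finset.sum_congr rfl fun j hj => ?_
    have := Finset.mem_range.1 hi
    have := Finset.mem_range.1 hj
    rw [show l + 2 - 1 - i + (i - 1 - j) = l - j by omega]
  rw [h2, sum_tri, Finset.sum_range_succ]
  push_cast
  rw [show ((l:ℝ) + 2 - 1 - (l + 1)) = 0 by ring, zero_mul, add_zero, ← Finset.sum_add_distrib]
  refine Finset.sum_congr rfl fun j hj => ?_
  ring

lemma IsBlk.s_eq (h : IsBlk A b B) (k : ℕ) :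
    (fun _ => 1) ⬝ᵥ yv B k = ∑ i ∈ Finset.range k, rv B i * bet A b (k - 1 - i) := by
  rw [h.y_eq, dotProduct_sum]
  simp [bet]

lemma IsBlk.walk_eq (h : IsBlk A b B) (k : ℕ) :
    ∑ i, ∑ j, (B ^ k) i j = (∑ i, ∑ j, (A ^ k) i j)
      + ∑ i ∈ Finset.range k, bet A b (k - 1 - i) * ((fun _ => 1) ⬝ᵥ yv B i)
      + 2 * ((fun _ => 1) ⬝ᵥ yv B k) + rv B k := by
  have h1 : ∑ i, ∑ j, (B ^ k) i j = (∑ i, ∑ j, Mv B k i j) + 2 * ((fun _ => 1) ⬝ᵥ yv B k) + rv B k := by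
    simp only [Fin.sum_univ_castSucc, h.row, Finset.sum_add_distrib, dotProduct, one_mul]
    simp only [Mv, rv, yv, Matrix.of_apply]
    ring
  rw [h1, h.M_eq]
  congr 2
  simp only [Matrix.add_apply, Finset.sum_add_distrib, Matrix.sum_apply]
  congr 1
  have : ∀ x : Fin m, ∑ j, ∑ c ∈ Finset.range k, vecMulVec (A ^ (k - 1 - c) *ᵥ b) (yv B c) x j
     = ∑ c ∈ Finset.range k, ∑ j, vecMulVec (A ^ (k - 1 - c) *ᵥ b) (yv B c) x j := fun x => Finset.sum_comm
  simp only [this]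
  rw [Finset.sum_comm]
  refine Finset.sum_congr rfl fun i _ => ?_
  simp only [vecMulVec_apply, bet, dotProduct, one_mul]
  rw [Finset.sum_mul_sum]

lemma r_agree {c : Fin m → ℝ} {C : Matrix (Fin (m+1)) (Fin (m+1)) ℝ}
    (h : IsBlk A b B) (h' : IsBlk A c C) (l : ℕ) (hr : ∀ i < l, rho A b i = rho A c i) :
    ∀ j < l + 2, rv B j = rv C j := by
  intro j
  induction j using Nat.strong_induction_on with
  | _ j ih =>
    intro hj
    cases j with
    | zero => rw [rv_zero, rv_zero]
    | succ j =>
      rw [h.r_eq, h'.r_eq]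
      refine Finset.sum_congr rfl fun i hi => ?_
      have := Finset.mem_range.1 hi
      rw [ih i (by omega) (by omega), hr _ (by omega)]

lemma rho_agree {c : Fin m → ℝ} {C : Matrix (Fin (m+1)) (Fin (m+1)) ℝ}
    (h : IsBlk A b B) (h' : IsBlk A c C) (N : ℕ) (ht : ∀ k ≤ N, (B ^ k).trace = (C ^ k).trace) :
    ∀ l, l + 2 ≤ N → rho A b l = rho A c l := by
  intro l
  induction l using Nat.strong_induction_on with
  | _ l ih =>
    intro hl
    have hr : ∀ i < l, rho A b i = rho A c i := fun i hi => ih i hi (by omega)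
    have hrv := r_agree h h' l hr
    have := ht (l+2) hl
    rw [h.trace_eq, h'.trace_eq, Finset.sum_range_succ', Finset.sum_range_succ'] at this
    have e : ∑ j ∈ Finset.range l, ((l:ℝ) + 2 - (j+1:ℕ)) * (rv B (j+1) * rho A b (l - (j+1)))
      = ∑ j ∈ Finset.range l, ((l:ℝ) + 2 - (j+1:ℕ)) * (rv C (j+1) * rho A c (l - (j+1))) := by
      refine Finset.sum_congr rfl fun j hj => ?_
      have := Finset.mem_range.1 hj
      rw [hrv _ (by omega), hr _ (by omega)]
    rw [e] at this
    simp only [rv_zero, Nat.cast_zero, sub_zero, one_mul, Nat.sub_zero] at this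
    have h3 := add_left_cancel (add_left_cancel this)
    exact mul_left_cancel₀ (by positivity) h3

lemma bet_agree {c : Fin m → ℝ} {C : Matrix (Fin (m+1)) (Fin (m+1)) ℝ}
    (h : IsBlk A b B) (h' : IsBlk A c C) (N : ℕ) (ht : ∀ k ≤ N, (B ^ k).trace = (C ^ k).trace)
    (hw : ∀ k ≤ N, ∑ i, ∑ j, (B ^ k) i j = ∑ i, ∑ j, (C ^ k) i j) :
    ∀ k, k + 1 ≤ N → bet A b k = bet A c k := by
  have hrho := rho_agree h h' N ht
  have hr : ∀ j ≤ N, rv B j = rv C j := fun j hj =>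
    r_agree h h' (N - 1) (fun i hi => hrho i (by omega)) j (by omega)
  intro k
  induction k using Nat.strong_induction_on with
  | _ k ih =>
    intro hk
    have hs : ∀ i ≤ k, ((fun _ => (1:ℝ)) ⬝ᵥ yv B i) = ((fun _ => (1:ℝ)) ⬝ᵥ yv C i) := by
      intro i hi
      rw [h.s_eq, h'.s_eq]
      refine Finset.sum_congr rfl fun j hj => ?_
      have := Finset.mem_range.1 hj
      rw [hr _ (by omega), ih _ (by omega) (by omega)]
    have := hw (k+1) hk
    rw [h.walk_eq, h'.walk_eq, h.s_eq (k+1), h'.s_eq (k+1), hr (k+1) hk] at this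
    rw [Finset.sum_range_succ' _ k, Finset.sum_range_succ' _ k, Finset.sum_range_succ' _ k,
      Finset.sum_range_succ' _ k] at this
    have e1 : ∑ i ∈ Finset.range k, bet A b (k + 1 - 1 - (i+1)) * ((fun _ => (1:ℝ)) ⬝ᵥ yv B (i+1))
       = ∑ i ∈ Finset.range k, bet A c (k + 1 - 1 - (i+1)) * ((fun _ => (1:ℝ)) ⬝ᵥ yv C (i+1)) := by
      refine Finset.sum_congr rfl fun j hj => ?_
      have := Finset.mem_range.1 hj
      rw [hs _ (by omega), ih _ (by omega) (by omega)]
    have e2 : ∑ i ∈ Finset.range k, rv B (i+1) * bet A b (k + 1 - 1 - (i+1))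
       = ∑ i ∈ Finset.range k, rv C (i+1) * bet A c (k + 1 - 1 - (i+1)) := by
      refine Finset.sum_congr rfl fun j hj => ?_
      have := Finset.mem_range.1 hj
      rw [hr _ (by omega), ih _ (by omega) (by omega)]
    rw [e1, e2] at this
    simp only [yv_zero, rv_zero, dotProduct_zero, mul_zero, one_mul, Nat.sub_zero, Nat.add_sub_cancel] at this
    linarith

end blocks

lemma wk_dot {m : ℕ} (A : Matrix (Fin m) (Fin m) ℝ) (hA : A.IsSymm) (d : Fin m → ℝ)
    (hm : 1 ≤ m)
    (hr : (walkMatrix A).rank = m - 1)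
    (hd : ∀ k, k + 1 < m → (fun _ => (1:ℝ)) ⬝ᵥ (A ^ k *ᵥ d) = 0) :
    (walkMatrix A)ᵀ *ᵥ d = 0 := by
  -- reduce to dot products
  have hW : ∀ j, ((walkMatrix A)ᵀ *ᵥ d) j = (fun _ => (1:ℝ)) ⬝ᵥ (A ^ (j:ℕ) *ᵥ d) := by
    intro j
    have hs : (A ^ (j:ℕ))ᵀ = A ^ (j:ℕ) := (hA.pow _)
    rw [Matrix.dotProduct_mulVec, ← Matrix.mulVec_transpose, hs]
    simp [Matrix.mulVec, walkMatrix, dotProduct]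
  set z : ℕ → ℝ := fun k => (fun _ => (1:ℝ)) ⬝ᵥ (A ^ k *ᵥ d) with hz
  -- nontrivial relation
  obtain ⟨a, ha0, ha⟩ : ∃ a : Fin (Fintype.card (Fin m)) → ℝ, a ≠ 0 ∧ walkMatrix A *ᵥ a = 0 := by
    by_contra hcon
    push Not at hcon
    have hinj : LinearMap.ker (walkMatrix A).mulVecLin = ⊥ := by
      rw [LinearMap.ker_eq_bot']
      intro x hx
      by_contra hx0
      exact hcon x hx0 hx
    have h1 := LinearMap.finrank_range_of_inj (LinearMap.ker_eq_bot.1 hinj)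
    rw [Matrix.rank] at hr
    rw [hr] at h1
    simp at h1
    omega
  have hrel : ∀ p : ℕ, ∑ j, a j * z (p + j) = 0 := by
    intro p
    have h1 : ((A ^ p) *ᵥ d) ⬝ᵥ (walkMatrix A *ᵥ a) = 0 := by rw [ha, dotProduct_zero]
    rw [Matrix.dotProduct_mulVec, ← Matrix.mulVec_transpose, dotProduct] at h1
    rw [← h1]
    refine Finset.sum_congr rfl fun j _ => ?_
    have hs : (A ^ (j:ℕ))ᵀ = A ^ (j:ℕ) := (hA.pow _)
    have : ((walkMatrix A)ᵀ *ᵥ (A ^ p *ᵥ d)) j = z (p + j) := by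
      simp only [hz]
      rw [add_comm, pow_add, ← Matrix.mulVec_mulVec, Matrix.dotProduct_mulVec, ← Matrix.mulVec_transpose, hs]
      simp [Matrix.mulVec, walkMatrix, dotProduct]
    rw [this, mul_comm]
  have hlast : z (m - 1) = 0 := by
    obtain ⟨j0, hj0⟩ := Function.ne_iff.1 ha0
    obtain ⟨j, hj, hmax⟩ := Finset.exists_max_image (Finset.univ.filter fun j => a j ≠ 0) id ⟨j0, by simpa using hj0⟩
    have hjm : (j:ℕ) < m := by simpa using j.2
    have h1 := hrel (m - 1 - j)
    rw [Finset.sum_eq_single j] at h1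
    · rw [show m - 1 - (j:ℕ) + j = m - 1 by omega] at h1
      exact (mul_eq_zero.1 h1).resolve_left (Finset.mem_filter.1 hj).2
    · intro i _ hij
      by_cases hi : a i = 0
      · rw [hi, zero_mul]
      · have h2 : i ≤ j := hmax i (by simpa using hi)
        have h3 : (i:ℕ) < j := lt_of_le_of_ne h2 (fun h => hij (Fin.ext h))
        rw [hz]; simp only
        rw [hd _ (by omega), mul_zero]
    · simp
  ext j
  rw [hW]
  have hjm : (j:ℕ) < m := by simpa using j.2
  by_cases h : (j:ℕ) + 1 < m
  · exact hd _ h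
  · rw [show (j:ℕ) = m - 1 by omega]; exact hlast

lemma ker_span {m : ℕ} (W : Matrix (Fin m) (Fin (Fintype.card (Fin m))) ℝ) (hm : 1 ≤ m)
    (hr : W.rank = m - 1) (ξ d : Fin m → ℝ) (hξ : ξ ≠ 0) (h1 : Wᵀ *ᵥ ξ = 0) (h2 : Wᵀ *ᵥ d = 0) :
    ∃ t : ℝ, d = t • ξ := by
  have hk := LinearMap.finrank_range_add_finrank_ker (Wᵀ).mulVecLin
  have hr' : Module.finrank ℝ (LinearMap.range (Wᵀ).mulVecLin) = m - 1 := by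
    rw [← hr, ← Matrix.rank_transpose W]; rfl
  rw [hr'] at hk
  simp only [Module.finrank_fintype_fun_eq_card, Fintype.card_fin] at hk
  have hone : Module.finrank ℝ (LinearMap.ker (Wᵀ).mulVecLin) = 1 := by omega
  have h3 := (finrank_eq_one_iff_of_nonzero' (⟨ξ, h1⟩ : LinearMap.ker (Wᵀ).mulVecLin)
    (fun h => hξ (congrArg Subtype.val h))).1 hone ⟨d, h2⟩
  obtain ⟨t, ht⟩ := h3
  exact ⟨t, (congrArg Subtype.val ht).symm⟩

lemma isBlk_graph {m : ℕ} (G : SimpleGraph (Fin (m+1))) :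
    IsBlk (adjMat (G.comap (Fin.castSucc : Fin m → Fin (m + 1))))
      (fun i => if G.Adj (Fin.castSucc i) (Fin.last m) then (1 : ℝ) else 0) (adjMat G) where
  symA := by
    ext i j
    simp [adjMat, G.adj_comm]
  h11 := by intro i j; simp [adjMat]
  h12 := by intro i; simp [adjMat]
  h21 := by intro i; simp [adjMat, G.adj_comm]
  h22 := by simp [adjMat]

lemma final_eq {m : ℕ} (hm : 2 ≤ m) (G H : SimpleGraph (Fin (m + 1)))
    (hcomap : H.comap (Fin.castSucc : Fin m → Fin (m + 1)) = G.comap (Fin.castSucc : Fin m → Fin (m + 1)))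
    (hcount : ∀ (q : Prop) (k : ℕ), k + 1 < m + 1 →
      (Finset.univ.filter (IsWk q k G)).card = (Finset.univ.filter (IsWk q k H)).card)
    (hac : (walkMatrix (adjMat (G.comap (Fin.castSucc : Fin m → Fin (m + 1))))).rank = m - 1)
    (ξ : Fin m → ℝ) (hξ : ξ ≠ 0)
    (hker : (walkMatrix (adjMat (G.comap (Fin.castSucc : Fin m → Fin (m + 1)))))ᵀ *ᵥ ξ = 0)
    (b : Fin m → ℝ)
    (hb : b = fun i => if G.Adj (Fin.castSucc i) (Fin.last m) then (1 : ℝ) else 0)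
    (hQ0b : ¬ ((∀ i, (householder ξ *ᵥ b) i = 0 ∨ (householder ξ *ᵥ b) i = 1)
        ∧ householder ξ *ᵥ b ≠ b)) : G = H := by
  have hG := isBlk_graph G
  have hH := isBlk_graph H
  rw [hcomap] at hH
  rw [← hb] at hG
  obtain ⟨c, hc⟩ : ∃ c : Fin m → ℝ, c = fun i => if H.Adj (Fin.castSucc i) (Fin.last m) then (1 : ℝ) else 0 := ⟨_, rfl⟩
  rw [← hc] at hH
  set A := adjMat (G.comap (Fin.castSucc : Fin m → Fin (m + 1))) with hA
  have htr : ∀ k ≤ m - 1, ((adjMat G) ^ k).trace = ((adjMat H) ^ k).trace := by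
    intro k hk
    have h0 := congrArg (Nat.cast : ℕ → ℝ) (hcount True k (by omega))
    rw [aux_count, aux_count] at h0
    simpa [Matrix.trace] using h0
  have hwk : ∀ k ≤ m - 1, ∑ i, ∑ j, ((adjMat G) ^ k) i j = ∑ i, ∑ j, ((adjMat H) ^ k) i j := by
    intro k hk
    have h0 := congrArg (Nat.cast : ℕ → ℝ) (hcount False k (by omega))
    rw [aux_count, aux_count] at h0
    simpa using h0
  have hbet := bet_agree hG hH (m - 1) htr hwk
  have hWd : (walkMatrix A)ᵀ *ᵥ (b - c) = 0 := by
    refine wk_dot A hG.symA _ (by omega) hac fun k hk => ?_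
    rw [Matrix.mulVec_sub, dotProduct_sub]
    exact sub_eq_zero.2 (hbet k (by omega))
  obtain ⟨t, ht⟩ := ker_span _ (by omega) hac ξ (b - c) hξ hker hWd
  have hb01 : b ⬝ᵥ b = (fun _ => (1:ℝ)) ⬝ᵥ b := by
    rw [hb]
    refine Finset.sum_congr rfl fun i _ => ?_
    simp only []
    split_ifs <;> simp
  have hc01 : c ⬝ᵥ c = (fun _ => (1:ℝ)) ⬝ᵥ c := by
    rw [hc]
    refine Finset.sum_congr rfl fun i _ => ?_
    simp only []
    split_ifs <;> simp
  have hbb : b ⬝ᵥ b = c ⬝ᵥ c := by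
    have := hbet 0 (by omega)
    simp only [bet, pow_zero, Matrix.one_mulVec] at this
    rw [hb01, hc01, this]
  have hcb : c = b - t • ξ := by rw [← ht]; abel
  have hξξ : ξ ⬝ᵥ ξ ≠ 0 := fun h => hξ (dotProduct_self_eq_zero.1 h)
  have hquad : t * (t * (ξ ⬝ᵥ ξ) - 2 * (ξ ⬝ᵥ b)) = 0 := by
    rw [hcb] at hbb
    simp only [sub_dotProduct, dotProduct_sub, smul_dotProduct, dotProduct_smul, smul_eq_mul] at hbb
    rw [dotProduct_comm b ξ] at hbb
    linarith
  have hbc : b = c := by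
    rcases mul_eq_zero.1 hquad with h | h
    · rw [hcb, h]; simp
    · have hq : householder ξ *ᵥ b = c := by
        have ht' : t = 2 / (ξ ⬝ᵥ ξ) * (ξ ⬝ᵥ b) := by
          field_simp
          linarith
        rw [hcb, householder, Matrix.sub_mulVec, Matrix.one_mulVec, Matrix.smul_mulVec, Matrix.vecMulVec_mulVec, ht']
        ext i
        simp
        ring
      rw [hq] at hQ0b
      by_contra hne
      refine hQ0b ⟨fun i => ?_, fun h => hne h.symm⟩
      rw [hc]
      by_cases h : H.Adj (Fin.castSucc i) (Fin.last m) <;> simp [h]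
  have hlast : ∀ i : Fin m, G.Adj (Fin.castSucc i) (Fin.last m) ↔ H.Adj (Fin.castSucc i) (Fin.last m) := by
    intro i
    have := congrFun hbc i
    rw [hb, hc] at this
    by_cases h1 : G.Adj (Fin.castSucc i) (Fin.last m) <;>
    by_cases h2 : H.Adj (Fin.castSucc i) (Fin.last m) <;> simp [h1, h2] at this ⊢
  ext i j
  refine Fin.lastCases ?_ (fun i => ?_) i <;> refine Fin.lastCases ?_ (fun j => ?_) j
  · simp
  · rw [G.adj_comm, H.adj_comm]; exact hlast j
  · exact hlast i
  · have : (H.comap (Fin.castSucc : Fin m → Fin (m + 1))).Adj i j ↔ (G.comap (Fin.castSucc : Fin m → Fin (m + 1))).Adj i j := by rw [hcomap]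
    exact this.symm

/-- Theorem 9 (ii). Let `n = m + 1 ≥ 3` and let `G` be a graph on
`Fin (m+1)` such that `G - uₙ` (the induced subgraph on the first `m` vertices) is almost
controllable, with Householder matrix `Q₀ = Q₀(G - uₙ)` not a permutation matrix. Let `b` be
the neighborhood indicator vector of the last vertex `uₙ`. If `Q₀ b` is not a `(0,1)`-vector
different from `b`, then `G` is reconstructible. -/
theorem reconstructible_of_almost_controllable_asymmetric
    {m : ℕ} (hn : 3 ≤ m + 1) (G : SimpleGraph (Fin (m + 1)))
    (hac : (walkMatrix (adjMat (G.comap (Fin.castSucc : Fin m → Fin (m + 1))))).rank = m - 1)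
    (ξ : Fin m → ℝ) (hξ : ξ ≠ 0)
    (hker : (walkMatrix (adjMat (G.comap (Fin.castSucc : Fin m → Fin (m + 1)))))ᵀ *ᵥ ξ = 0)
    (b : Fin m → ℝ)
    (hb : b = fun i => if G.Adj (Fin.castSucc i) (Fin.last m) then (1 : ℝ) else 0)
    (hnotperm : ¬ IsPermMatrix (householder ξ))
    (hQ0b : ¬ ((∀ i, (householder ξ *ᵥ b) i = 0 ∨ (householder ξ *ᵥ b) i = 1)
        ∧ householder ξ *ᵥ b ≠ b)) :
    Reconstructible G := by
  intro H ⟨σ, hσ⟩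
  obtain ⟨φ⟩ := hσ (Fin.last m)
  have hinj : Function.Injective (Fin.lastCases (motive := fun _ => Fin (m+1)) (σ (Fin.last m))
      (fun i => (φ ⟨Fin.castSucc i, (Fin.castSucc_lt_last i).ne⟩ : Fin (m+1)))) := by
    intro x y
    refine Fin.lastCases ?_ (fun x => ?_) x <;> refine Fin.lastCases ?_ (fun y => ?_) y
    · simp
    · simp only [Fin.lastCases_last, Fin.lastCases_castSucc]
      intro h
      exact absurd h.symm (φ ⟨Fin.castSucc y, (Fin.castSucc_lt_last y).ne⟩).2
    · simp only [Fin.lastCases_last, Fin.lastCases_castSucc]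
      intro h
      exact absurd h (φ ⟨Fin.castSucc x, (Fin.castSucc_lt_last x).ne⟩).2
    · simp only [Fin.lastCases_castSucc]
      intro h
      exact congrArg Subtype.val (φ.injective (Subtype.ext h))
  let τ : Fin (m+1) ≃ Fin (m+1) := Equiv.ofBijective _ (Finite.injective_iff_bijective.1 hinj)
  have hτ : ∀ i : Fin m, τ (Fin.castSucc i) = φ ⟨Fin.castSucc i, (Fin.castSucc_lt_last i).ne⟩ := by
    intro i
    simp [τ]
  have iso : H.comap τ ≃g H := SimpleGraph.Iso.comap τ H
  have hcomap : (H.comap τ).comap (Fin.castSucc : Fin m → Fin (m + 1))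
      = G.comap (Fin.castSucc : Fin m → Fin (m + 1)) := by
    ext i j
    simp only [SimpleGraph.comap_adj, hτ]
    exact φ.map_rel_iff (a := ⟨Fin.castSucc i, (Fin.castSucc_lt_last i).ne⟩)
      (b := ⟨Fin.castSucc j, (Fin.castSucc_lt_last j).ne⟩)
  have hcount : ∀ (q : Prop) (k : ℕ), k + 1 < m + 1 →
      (Finset.univ.filter (IsWk q k G)).card
        = (Finset.univ.filter (IsWk q k (H.comap τ))).card := by
    intro q k hk
    rw [cnt_deck G H σ hσ q k hk, ← Fintype.card_subtype, ← Fintype.card_subtype]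
    refine Fintype.card_congr
      (Equiv.subtypeEquiv (Equiv.arrowCongr (Equiv.refl _) τ) ?_).symm
    intro f
    simp [IsWk]
  have hGH := final_eq (by omega) G (H.comap τ) hcomap hcount hac ξ hξ hker b hb hQ0b
  exact ⟨hGH ▸ iso⟩
end
end
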